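/- For every cd-polynomial v ∈ ℤ⟨c,d⟩, the Tchebyshev transform satisfies T(v·a) = ω(a·v*)*, where * denotes reversal of monomials. -/

import Mathlib

open scoped TensorProduct

noncomputable section

namespace Tcheb

/-! ### The algebra `R⟨a,b⟩` of ab-polynomials -/

/-- Words in the two noncommuting letters `a` (encoded `true`) and `b` (encoded `false`). -/
abbrev ABWord : Type := FreeMonoid Bool

/-- The ring `R⟨a,b⟩` of polynomials in two noncommuting variables `a` and `b`. -/
abbrev AB (R : Type) [CommRing R] : Type := MonoidAlgebra R ABWord

variable (R : Type) [CommRing R]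

/-- The ab-monomial corresponding to a word. -/
def word (l : List Bool) : AB R := MonoidAlgebra.of R ABWord (FreeMonoid.ofList l)

/-- The variable `a`. -/
def av : AB R := word R [true]
/-- The variable `b`. -/
def bv : AB R := word R [false]
/-- `c = a + b`. -/
def cv : AB R := av R + bv R
/-- `d = ab + ba`. -/
def dv : AB R := av R * bv R + bv R * av R
/-- `a - b`. -/
def ev : AB R := av R - bv R

/-- The linear map defined by prescribing values on the basis of ab-monomials. -/
def onBasis {M : Type} [AddCommMonoid M] [Module R M] (f : List Bool → M) :
    AB R →ₗ[R] M :=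
  (Finsupp.lift M R ABWord fun w => f (FreeMonoid.toList w)) ∘ₗ
    (MonoidAlgebra.coeffLinearEquiv R).toLinearMap

/-- The algebra map `A` with `A(a) = 1`, `A(b) = 0`. -/
def Amap : AB R →ₐ[R] R :=
  MonoidAlgebra.lift R R ABWord (FreeMonoid.lift fun x => if x then (1 : R) else 0)

/-- The coproduct on `R⟨a,b⟩`: on an ab-monomial `u₁ ⋯ u_k` it is
`Σ_{i=1}^k u₁ ⋯ u_{i-1} ⊗ u_{i+1} ⋯ u_k`. -/
def Delta : AB R →ₗ[R] AB R ⊗[R] AB R :=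
  onBasis R fun w => ∑ i ∈ Finset.range w.length,
    word R (w.take i) ⊗ₜ[R] word R (w.drop (i + 1))

/-- The linear map `C(u) = 2·A(u) + Σ_u A(u₍₁₎)·A(u₍₂₎)`. -/
def Cmap : AB R →ₗ[R] R :=
  2 • (Amap R).toLinearMap +
    (LinearMap.mul' R R ∘ₗ
      TensorProduct.map (Amap R).toLinearMap (Amap R).toLinearMap) ∘ₗ Delta R

/-- `κ(u) = A(u)·(a-b)^(deg u)` on homogeneous `u`, extended linearly. -/
def kappa : AB R →ₗ[R] AB R :=
  onBasis R fun w => Amap R (word R w) • ev R ^ w.length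

/-- `ν(u) = C(u)·(a-b)^(deg u)` on homogeneous `u`, extended linearly. -/
def nuMap : AB R →ₗ[R] AB R :=
  onBasis R fun w => Cmap R (word R w) • ev R ^ w.length

end Tcheb

namespace Tcheb

/-- Cutting a word into the list of segments between the (sorted) cut positions. -/
def segments : List Bool → List ℕ → List (List Bool)
  | l, [] => [l]
  | l, i :: rest => l.take i :: segments (l.drop (i + 1)) (rest.map fun j => j - (i + 1))
  termination_by _ cuts => cuts.length
  decreasing_by simp

variable (R : Type) [CommRing R]

/-- For segments `[s₁, …, s_k]` this is `ν(s₁)·b·ν(s₂)·b ⋯ b·ν(s_{k-1})·b·κ(s_k)`. -/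
def chainProd : List (List Bool) → AB R
  | [] => 1
  | [s] => kappa R (word R s)
  | s :: rest => nuMap R (word R s) * bv R * chainProd rest

/-- The Tchebyshev transform (of the first kind) on ab-polynomials:
`T(u) = Σ_{k ≥ 1} Σ_u ν(u₍₁₎)·b·ν(u₍₂₎)·b ⋯ b·ν(u₍ₖ₋₁₎)·b·κ(u₍ₖ₎)`,
where the inner sum is over the `k`-fold coproduct.  On the ab-monomial basis this
is the sum, over all sets of positions of deleted letters, of the corresponding
products over the resulting segments. -/
def Tmap : AB R →ₗ[R] AB R :=
  onBasis R fun w => ∑ S : Finset (Fin w.length),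
    chainProd R (segments w ((S.sort (· ≤ ·)).map Fin.val))

/-- The `ω` map on a word: replace each occurrence of `ab` by `2d` and all
remaining letters by `c`. -/
def omegaWord : List Bool → AB R
  | [] => 1
  | true :: false :: rest => (2 * dv R) * omegaWord rest
  | _ :: rest => cv R * omegaWord rest

/-- The `ω` map of Billera–Ehrenborg–Readdy. -/
def omegaMap : AB R →ₗ[R] AB R := onBasis R fun w => omegaWord R w

/-- The reversal involution `u ↦ u*` of ab-polynomials. -/
def revMap : AB R →ₗ[R] AB R := onBasis R fun w => word R w.reverse

/-- `H*(1) = 0` and `H*(u·a) = H*(u·b) = u`. -/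
def Hstar : AB R →ₗ[R] AB R :=
  onBasis R fun w => if w = [] then 0 else word R w.dropLast

/-- The Tchebyshev transform of the second kind `U(u) = H*(T(u·a))`. -/
def Umap : AB R →ₗ[R] AB R := Hstar R ∘ₗ Tmap R ∘ₗ LinearMap.mulRight R (av R)

/-- `σ(u) = Σ_u κ(u₍₁₎)·b·T(u₍₂₎)`. -/
def sigmaMap : AB R →ₗ[R] AB R :=
  LinearMap.mul' R (AB R) ∘ₗ
    TensorProduct.map (LinearMap.mulRight R (bv R) ∘ₗ kappa R) (Tmap R) ∘ₗ Delta R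

/-! ### Graded posets and the ab-index -/

/-- `rk` is a rank function for a bounded poset: `rk ⊥ = 0` and covers raise rank by one. -/
def IsRankFun (α : Type) [PartialOrder α] [OrderBot α] (rk : α → ℕ) : Prop :=
  rk ⊥ = 0 ∧ ∀ x y : α, x ⋖ y → rk y = rk x + 1

/-- `f` lists the elements of a chain in increasing order with respect to the
strict order relation `lt`. -/
def IsStrictChain {α : Type} (lt : α → α → Prop) {n : ℕ} (f : Fin (n + 1) → α) : Prop :=
  ∀ i j : Fin (n + 1), i < j → lt (f i) (f j)

/-- The weight of a chain `x₀ < x₁ < ⋯ < x_k`: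
`(a-b)^{ρ(x₀,x₁)-1}·b·(a-b)^{ρ(x₁,x₂)-1}·b ⋯ b·(a-b)^{ρ(x_{k-1},x_k)-1}`. -/
def chainWt {α : Type} (rk : α → ℕ) {n : ℕ} (f : Fin (n + 1) → α) : AB R :=
  (List.intersperse (bv R)
    (List.ofFn fun i : Fin n => ev R ^ (rk (f i.succ) - rk (f i.castSucc) - 1))).prod

/-- The ab-index `Ψ` of the graded poset with strict order relation `lt`, rank
function `rk`, minimum `b` and maximum `t`: the sum of the weights of all chains
from `b` to `t`. -/
def PsiRel {α : Type} (lt : α → α → Prop) (rk : α → ℕ) (b t : α) : AB R :=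
  ∑ᶠ (n : ℕ), ∑ᶠ (f : Fin (n + 1) → α)
    (_ : IsStrictChain lt f ∧ f 0 = b ∧ f (Fin.last n) = t), chainWt R rk f

end Tcheb

namespace Tcheb

/-! ### The Tchebyshev transform of a graded poset -/

section TPoset

variable (α : Type) [PartialOrder α] [BoundedOrder α]

/-- The elements `[x,y]` of the Tchebyshev transform: intervals of `P ∪ {-1̂}`,
i.e. pairs `(x,y)` with `x ∈ P ∪ {-1̂}`, `y ∈ P` and `x < y`. -/
def TPel : Type := {p : WithBot α × α // p.1 < (p.2 : WithBot α)}

/-- The underlying set of the Tchebyshev transform `T(P)`: the intervals `[x,y]`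
together with a new maximum element (`none`). -/
def TP : Type := Option (TPel α)

/-- The cover relation of the Tchebyshev transform `T(P)`:
`[x,y] ⋖ [y,w]` and `[x,y] ⋖ [x,w]` whenever `y ⋖ w` in `P`, and `[x,1̂] ⋖ 1̂_{T(P)}`. -/
inductive TPcov : TP α → TP α → Prop
  | up {x : WithBot α} {y w : α} (h1 : x < (y : WithBot α))
      (h2 : (y : WithBot α) < (w : WithBot α)) (hc : y ⋖ w) :
      TPcov (some ⟨(x, y), h1⟩) (some ⟨((y : WithBot α), w), h2⟩)
  | same {x : WithBot α} {y w : α} (h1 : x < (y : WithBot α))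
      (h2 : x < (w : WithBot α)) (hc : y ⋖ w) :
      TPcov (some ⟨(x, y), h1⟩) (some ⟨(x, w), h2⟩)
  | top {x : WithBot α} (h1 : x < ((⊤ : α) : WithBot α)) :
      TPcov (some ⟨(x, (⊤ : α)), h1⟩) none

/-- The strict order relation of `T(P)`, generated by the cover relation. -/
def TPlt : TP α → TP α → Prop := Relation.TransGen (TPcov α)

/-- The order relation of `T(P)`, generated by the cover relation. -/
def TPle : TP α → TP α → Prop := Relation.ReflTransGen (TPcov α)

/-- The minimum element `[-1̂, 0̂]` of `T(P)`. -/
def TPbot : TP α := some ⟨((⊥ : WithBot α), (⊥ : α)), WithBot.bot_lt_coe _⟩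

/-- The maximum element `1̂_{T(P)}` of `T(P)`. -/
def TPtop : TP α := none

/-- The rank function of `T(P)`: `ρ([x,y]) = ρ(y)` and `ρ(1̂_{T(P)}) = ρ(P) + 1`. -/
def TPrk (rk : α → ℕ) : TP α → ℕ
  | some p => rk p.1.2
  | none => rk (⊤ : α) + 1

theorem TPbot_ne_TPtop : TPbot α ≠ TPtop α := by exact Option.some_ne_none _

/-- The map `z : T(P) → P ∪ {2̂}` with `z([x,y]) = y` and `z(1̂_{T(P)}) = 2̂`. -/
def zmap : TP α → WithTop α
  | some p => (p.1.2 : WithTop α)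
  | none => ⊤

/-- The number of elements of the interval `[u,v]` of `P`, for `u, v ∈ P ∪ {2̂}`. -/
def intervalCard (u v : WithTop α) : ℕ :=
  Set.ncard {t : α | u ≤ (t : WithTop α) ∧ (t : WithTop α) ≤ v}

end TPoset

/-! ### The dual diamond product -/

/-- The strict order relation of the dual diamond product
`P ◇* Q = ((P ∖ {1̂}) × (Q ∖ {1̂})) ∪ {1̂}` (with `none` the new maximum), built from
the order relations `leA, ltA` and `leB, ltB` of the two factors. -/
def dsLT {A B : Type} (leA ltA : A → A → Prop) (leB ltB : B → B → Prop) :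
    Option (A × B) → Option (A × B) → Prop
  | some p, some q => (leA p.1 q.1 ∧ leB p.2 q.2) ∧ (ltA p.1 q.1 ∨ ltB p.2 q.2)
  | some _, none => True
  | none, _ => False

/-! ### EL-labelings -/

/-- The list of edge labels along a chain (given as a list of poset elements). -/
def labelsList {α Λ : Type} (lam : α → α → Λ) (l : List α) : List Λ :=
  (l.zip l.tail).map fun p => lam p.1 p.2

/-- `l` is a maximal (saturated) chain of the interval `[x,y]` with respect to the
cover relation `cov`: it runs from `x` to `y` and every step is a cover. -/
def IsMaxChainList {α : Type} (cov : α → α → Prop) (x y : α) (l : List α) : Prop :=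
  l.head? = some x ∧ l.getLast? = some y ∧ l.Chain' cov

/-- An `EL`-labeling of the poset whose cover relation is `cov`, with labels in the
linearly ordered set `(Λ, lle, llt)`: every interval has a unique rising maximal
chain, which moreover is lexicographically least among all maximal chains of the
interval. -/
def IsELLabeling (α Λ : Type) (lle llt : Λ → Λ → Prop)
    (cov : α → α → Prop) (lam : α → α → Λ) : Prop :=
  ∀ x y : α, Relation.ReflTransGen cov x y →
    ∃ l : List α, (IsMaxChainList cov x y l ∧ (labelsList lam l).Chain' lle) ∧
      (∀ l' : List α, IsMaxChainList cov x y l' →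
        (labelsList lam l').Chain' lle → l' = l) ∧
      (∀ l' : List α, IsMaxChainList cov x y l' →
        labelsList lam l = labelsList lam l' ∨
          List.Lex llt (labelsList lam l) (labelsList lam l'))

/-! ### Eulerian posets -/

/-- A graded poset is Eulerian if every nontrivial interval `[x,y]` has the
same number of elements of even rank as of odd rank. -/
def IsEulerian (α : Type) [PartialOrder α] (rk : α → ℕ) : Prop :=
  ∀ x y : α, x < y →
    Set.ncard {z : α | x ≤ z ∧ z ≤ y ∧ Even (rk z)} =
      Set.ncard {z : α | x ≤ z ∧ z ≤ y ∧ ¬ Even (rk z)}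

/-! ### The face lattice of the crosspolytope -/

/-- A face of the `n`-dimensional crosspolytope: a partial sign vector, i.e. the
pair `(S, ε)` of a subset `S ⊆ {1,…,n}` (the set of coordinates where the function
takes a value `some`) together with a sign function `ε` on `S`. -/
def CrossEl (n : ℕ) : Type := Fin n → Option Bool

/-- `(S,ε) ≤ (T,δ)` iff `S ⊆ T` and `δ` restricted to `S` is `ε`. -/
instance (n : ℕ) : PartialOrder (CrossEl n) where
  le f g := ∀ i s, f i = some s → g i = some s
  le_refl f i s h := h
  le_trans f g h fg gh i s hi := gh i s (fg i s hi)
  le_antisymm f g fg gf := by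
    funext i
    cases hf : f i with
    | some s => exact (fg i s hf).symm
    | none =>
      cases hg : g i with
      | some s => exact absurd (gf i s hg) (by simp [hf])
      | none => rfl

/-- The face lattice of the `n`-dimensional crosspolytope: all partial sign
vectors together with a new maximum element. -/
abbrev Cross (n : ℕ) : Type := WithTop (CrossEl n)

/-- The rank function of the face lattice of the crosspolytope:
`ρ(S,ε) = |S|` and the maximum has rank `n + 1`. -/
def crossRk (n : ℕ) : Cross n → ℕ
  | none => n + 1
  | some f => (Finset.univ.filter fun i : Fin n => (f i).isSome).card

/-- The minimal element (the empty face) of the crosspolytope face lattice. -/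
def crossBot (n : ℕ) : Cross n := WithTop.some (fun _ => none)

/-- The maximal element of the crosspolytope face lattice. -/
def crossTop (n : ℕ) : Cross n := ⊤

/-! ### Quasisymmetric functions -/

/-- The monomial quasisymmetric function `M_{(p₁,…,p_k)}`, as a formal power
series in the countably many commuting variables `t₁, t₂, …` (indexed by `ℕ`). -/
def MQ (R : Type) [CommRing R] (ps : List ℕ) : MvPowerSeries ℕ R :=
  fun m => if ((m.support.sort (· ≤ ·)).map fun i => m i) = ps then 1 else 0

/-- The `t`-part of a monomial in the variables `s` (index `none`) and
`t₁, t₂, …` (indices `some i`). -/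
def tpart (m : Option ℕ →₀ ℕ) : ℕ →₀ ℕ :=
  Finsupp.comapDomain some m (Option.some_injective ℕ).injOn

/-- The type B monomial quasisymmetric function `s^p · M_{(p₁,…,p_k)}`, a formal
power series in the variables `s` (index `none`) and `t₁, t₂, …` (indices `some i`). -/
def MB (R : Type) [CommRing R] (p : ℕ) (ps : List ℕ) : MvPowerSeries (Option ℕ) R :=
  fun m => if m none = p ∧
      (((tpart m).support.sort (· ≤ ·)).map fun i => tpart m i) = ps then 1 else 0

/-- The quasisymmetric function `F(P)` of the graded poset with strict order
relation `lt`, rank function `rk`, minimum `b` and maximum `t`: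
`F(P) = Σ_c M_{(ρ(x₀,x₁),…,ρ(x_{k-1},x_k))}` over all chains `c` from `b` to `t`. -/
def FQ (R : Type) [CommRing R] {α : Type} (lt : α → α → Prop) (rk : α → ℕ)
    (b t : α) : MvPowerSeries ℕ R :=
  ∑ᶠ (n : ℕ), ∑ᶠ (f : Fin (n + 1) → α)
    (_ : IsStrictChain lt f ∧ f 0 = b ∧ f (Fin.last n) = t),
    MQ R (List.ofFn fun i : Fin n => rk (f i.succ) - rk (f i.castSucc))

/-- The type B quasisymmetric function `F_B(P) = Σ_{0̂ < x ≤ 1̂} s^{ρ(x)-1}·F([x,1̂])`,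
written as a sum over all chains `0̂ < x₀ < x₁ < ⋯ < x_k = 1̂` of
`s^{ρ(x₀)-1}·M_{(ρ(x₀,x₁),…,ρ(x_{k-1},x_k))}`. -/
def FB (R : Type) [CommRing R] {α : Type} (lt : α → α → Prop) (rk : α → ℕ)
    (b t : α) : MvPowerSeries (Option ℕ) R :=
  ∑ᶠ (n : ℕ), ∑ᶠ (f : Fin (n + 1) → α)
    (_ : IsStrictChain lt f ∧ lt b (f 0) ∧ f (Fin.last n) = t),
    MB R (rk (f 0) - 1) (List.ofFn fun i : Fin n => rk (f i.succ) - rk (f i.castSucc))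

/-! ### Characters and the chain maps -/

/-- A character on `k⟨a,b⟩`: a linear functional which is multiplicative with
respect to Cartesian products of graded posets (of rank at least 1). -/
def IsCharacter (k : Type) [Field k] (G : AB k →ₗ[k] k) : Prop :=
  ∀ (α β : Type) [Fintype α] [Fintype β] [PartialOrder α] [PartialOrder β]
    [BoundedOrder α] [BoundedOrder β], ∀ (rkα : α → ℕ) (rkβ : β → ℕ),
    IsRankFun α rkα → IsRankFun β rkβ → 1 ≤ rkα ⊤ → 1 ≤ rkβ ⊤ →
    G (PsiRel k (· < ·) (fun p : α × β => rkα p.1 + rkβ p.2)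
        ((⊥ : α), (⊥ : β)) ((⊤ : α), (⊤ : β))) =
      G (PsiRel k (· < ·) rkα ⊥ ⊤) * G (PsiRel k (· < ·) rkβ ⊥ ⊤)

/-- The quasisymmetric function image `g̃F(P)` of the chain map of the second kind:
`Σ_c G(Ψ([x₀,x₁])) ⋯ G(Ψ([x_{k-1},x_k])) · M_{(ρ(x₀,x₁),…,ρ(x_{k-1},x_k))}`,
summed over all chains `c = {b = x₀ < ⋯ < x_k = t}`. -/
def gtF (k : Type) [Field k] (G : AB k →ₗ[k] k) {α : Type} (lt : α → α → Prop)
    (rk : α → ℕ) (b t : α) : MvPowerSeries ℕ k :=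
  ∑ᶠ (n : ℕ), ∑ᶠ (f : Fin (n + 1) → α)
    (_ : IsStrictChain lt f ∧ f 0 = b ∧ f (Fin.last n) = t),
    (∏ i : Fin n, G (PsiRel k lt rk (f i.castSucc) (f i.succ))) •
      MQ k (List.ofFn fun i : Fin n => rk (f i.succ) - rk (f i.castSucc))

/-- The type B quasisymmetric function image `gF_B(P) = Σ_{0̂ < x ≤ 1̂}
s^{ρ(x)-1}·g̃F([x,1̂])` of the chain map of the first kind, written as a sum over
all chains `0̂ < x₀ < ⋯ < x_k = 1̂`. -/
def gFB (k : Type) [Field k] (G : AB k →ₗ[k] k) {α : Type} (lt : α → α → Prop)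
    (rk : α → ℕ) (b t : α) : MvPowerSeries (Option ℕ) k :=
  ∑ᶠ (n : ℕ), ∑ᶠ (f : Fin (n + 1) → α)
    (_ : IsStrictChain lt f ∧ lt b (f 0) ∧ f (Fin.last n) = t),
    (∏ i : Fin n, G (PsiRel k lt rk (f i.castSucc) (f i.succ))) •
      MB k (rk (f 0) - 1) (List.ofFn fun i : Fin n => rk (f i.succ) - rk (f i.castSucc))

/-- The space of homogeneous ab-polynomials of degree `n`. -/
def ABhomog (k : Type) [Field k] (n : ℕ) : Submodule k (AB k) :=
  Submodule.span k {x : AB k | ∃ w : List Bool, w.length = n ∧ x = word k w}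

/-!
Conjugating by reversal turns the claim into `T(va) = ω̃(va)` with `ω̃(u) = ω(u*)*`. Let `N` be the
transform obtained from `T` by using `ν` instead of `κ` in the last place. Appending a letter to
a word either extends its last segment or cuts at the new letter, which yields recursions for `T`
and `N` under right multiplication. Combined, they read `T(vca) = T(va)c + N(v)d`,
`N(vc) = 2T(va) + N(v)c`, and similarly for `d`. The pair `(ω̃(va), 2ω̃(v))` satisfies the same
recursions as `(T(va), N(v))` and has the same value `(c, 2)` at `v = 1`, so the two pairs agree on
`ℤ⟨c,d⟩`.
-/

theorem adjoin_le_of_mul_mem_right {R A : Type*} [CommSemiring R] [Semiring A] [Algebra R A]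
    {s : Set A} {S : Submodule R A} (one_mem : 1 ∈ S)
    (mul_mem_right : ∀ x ∈ S, ∀ y ∈ s, x * y ∈ S) :
    Subalgebra.toSubmodule (Algebra.adjoin R s) ≤ S := by
  rw [Algebra.adjoin_eq_span, Submodule.span_le]
  intro x hx
  induction hx using Submonoid.closure_induction_right with
  | one => exact one_mem
  | mul_right x _ y hy hx => exact mul_mem_right x hx y hy

theorem sum_powerset_sort {α M : Type*} [LinearOrder α] [AddCommMonoid M] (s : Finset α)
    (g : List α → M) : ∑ t ∈ s.powerset, g t.sort = (s.sort.sublists.map g).sum := by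
  rw [← List.sum_toFinset g (List.nodup_sublists.mpr s.sortedLT_sort.nodup)]
  refine Finset.sum_nbij' Finset.sort List.toFinset ?_ ?_ ?_ ?_ fun _ _ => rfl
  · intro t ht
    rw [List.mem_toFinset, List.mem_sublists]
    refine List.sublist_of_subperm_of_sortedLE ?_ t.sortedLT_sort.sortedLE s.sortedLT_sort.sortedLE
    refine t.sortedLT_sort.nodup.subperm fun a ha => ?_
    exact s.mem_sort _ |>.mpr (Finset.mem_powerset.mp ht (t.mem_sort _ |>.mp ha))
  · intro l hl
    rw [List.mem_toFinset, List.mem_sublists] at hl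
    exact Finset.mem_powerset.mpr fun a ha =>
      s.mem_sort _ |>.mp (hl.subset (List.mem_toFinset.mp ha))
  · exact fun t _ => t.sort_toFinset _
  · intro l hl
    rw [List.mem_toFinset, List.mem_sublists] at hl
    exact List.toFinset_sort _ (s.sortedLT_sort.nodup.sublist hl) |>.mpr
      (s.pairwise_sort _ |>.sublist hl)

theorem sum_finset_fin_sort {M : Type*} [AddCommMonoid M] (n : ℕ) (g : List ℕ → M) :
    ∑ s : Finset (Fin n), g (s.sort.map Fin.val) = ((List.range n).sublists.map g).sum := by
  rw [← Finset.powerset_univ, sum_powerset_sort _ (g <| ·.map Fin.val), Fin.sort_univ,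
    ← List.map_coe_finRange_eq_range, List.sublists_map, List.map_map]
  rfl

section Words

variable {R : Type} [CommRing R] {M : Type} [AddCommMonoid M] [Module R M]

theorem word_nil : word R [] = 1 :=
  map_one (MonoidAlgebra.of R ABWord)

theorem word_mul_word (l m : List Bool) : word R l * word R m = word R (l ++ m) :=
  (map_mul (MonoidAlgebra.of R ABWord) _ _).symm

@[simp]
theorem onBasis_word (f : List Bool → M) (l : List Bool) : onBasis R f (word R l) = f l := by
  simp [onBasis, word, MonoidAlgebra.of, MonoidAlgebra.coeffLinearEquiv]

theorem eq_of_eq_on_words {f g : AB R →ₗ[R] M} (h : ∀ l, f (word R l) = g (word R l))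
    (x : AB R) : f x = g x :=
  LinearMap.congr_fun
    (MonoidAlgebra.lhom_ext' fun w => LinearMap.ext_ring (h (FreeMonoid.toList w))) x

end Words

section Reversal

variable {R : Type} [CommRing R]

theorem revMap_word (l : List Bool) : revMap R (word R l) = word R l.reverse :=
  onBasis_word _ l

theorem revMap_one : revMap R 1 = 1 := by
  rw [← word_nil, revMap_word, List.reverse_nil]

theorem revMap_mul (x y : AB R) : revMap R (x * y) = revMap R y * revMap R x := by
  refine eq_of_eq_on_words (f := revMap R ∘ₗ LinearMap.mulRight R y)
    (g := LinearMap.mulLeft R (revMap R y) ∘ₗ revMap R) (fun l => ?_) x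
  refine eq_of_eq_on_words (f := revMap R ∘ₗ LinearMap.mulLeft R (word R l))
    (g := LinearMap.mulRight R (revMap R (word R l)) ∘ₗ revMap R) (fun m => ?_) y
  simp [revMap_word, word_mul_word]

theorem revMap_av : revMap R (av R) = av R :=
  revMap_word [true]

theorem revMap_bv : revMap R (bv R) = bv R :=
  revMap_word [false]

theorem revMap_cv : revMap R (cv R) = cv R := by
  rw [cv, map_add, revMap_av, revMap_bv]

theorem revMap_dv : revMap R (dv R) = dv R := by
  rw [dv, map_add, revMap_mul, revMap_mul, revMap_av, revMap_bv, add_comm]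

end Reversal

section OmegaRev

variable (R : Type) [CommRing R]

/-- The conjugate `u ↦ ω(u*)*` of `ω` by reversal.  On an ab-monomial it replaces each factor
`ba` by `2d` and each remaining letter by `c`, so that it satisfies recursions for multiplication
on the right, like the Tchebyshev transform. -/
def omegaRev : AB R →ₗ[R] AB R := revMap R ∘ₗ omegaMap R ∘ₗ revMap R

variable {R}

theorem omegaRev_word (l : List Bool) :
    omegaRev R (word R l) = revMap R (omegaWord R l.reverse) := by
  simp only [omegaRev, omegaMap, LinearMap.comp_apply, revMap_word, onBasis_word]

theorem omegaRev_mul_av (x : AB R) :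
    omegaRev R (x * av R) = revMap R (omegaMap R (av R * revMap R x)) := by
  simp only [omegaRev, LinearMap.comp_apply, revMap_mul, revMap_av]

theorem omegaRev_one : omegaRev R 1 = 1 := by
  rw [← word_nil, omegaRev_word, List.reverse_nil, omegaWord, revMap_one, word_nil]

theorem omegaRev_av : omegaRev R (av R) = cv R := by
  simp [av, omegaRev_word, omegaWord, revMap_cv]

theorem omegaRev_mul_bv (x : AB R) : omegaRev R (x * bv R) = omegaRev R x * cv R := by
  refine eq_of_eq_on_words (f := omegaRev R ∘ₗ LinearMap.mulRight R (bv R))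
    (g := LinearMap.mulRight R (cv R) ∘ₗ omegaRev R) (fun l => ?_) x
  simp [bv, word_mul_word, omegaRev_word, omegaWord, revMap_mul, revMap_cv]

theorem omegaRev_mul_av_mul_av (x : AB R) :
    omegaRev R (x * av R * av R) = omegaRev R (x * av R) * cv R := by
  refine eq_of_eq_on_words
    (f := omegaRev R ∘ₗ LinearMap.mulRight R (av R) ∘ₗ LinearMap.mulRight R (av R))
    (g := LinearMap.mulRight R (cv R) ∘ₗ omegaRev R ∘ₗ LinearMap.mulRight R (av R))
    (fun l => ?_) x
  simp [av, word_mul_word, omegaRev_word, omegaWord, revMap_mul, revMap_cv]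

theorem omegaRev_mul_bv_mul_av (x : AB R) :
    omegaRev R (x * bv R * av R) = 2 • (omegaRev R x * dv R) := by
  refine eq_of_eq_on_words
    (f := omegaRev R ∘ₗ LinearMap.mulRight R (av R) ∘ₗ LinearMap.mulRight R (bv R))
    (g := 2 • LinearMap.mulRight R (dv R) ∘ₗ omegaRev R) (fun l => ?_) x
  simp [av, bv, word_mul_word, omegaRev_word, omegaWord, revMap_mul, revMap_dv, two_mul, add_mul]

theorem omegaRev_mul_cv (x : AB R) :
    omegaRev R (x * cv R) = omegaRev R (x * av R) + omegaRev R x * cv R := by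
  rw [cv, mul_add, map_add, omegaRev_mul_bv, cv]

theorem omegaRev_mul_cv_mul_av (x : AB R) :
    omegaRev R (x * cv R * av R) = omegaRev R (x * av R) * cv R + 2 • (omegaRev R x * dv R) := by
  conv_lhs => rw [cv, mul_add, add_mul, map_add, omegaRev_mul_av_mul_av, omegaRev_mul_bv_mul_av]

theorem mul_dv (x : AB R) : x * dv R = x * av R * bv R + x * bv R * av R := by
  rw [dv, mul_add, mul_assoc, mul_assoc]

theorem omegaRev_mul_dv (x : AB R) :
    omegaRev R (x * dv R) = omegaRev R (x * av R) * cv R + 2 • (omegaRev R x * dv R) := by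
  rw [mul_dv, map_add, omegaRev_mul_bv, omegaRev_mul_bv_mul_av]

theorem omegaRev_mul_dv_mul_av (x : AB R) :
    omegaRev R (x * dv R * av R) =
      2 • (omegaRev R (x * av R) * dv R) + 2 • (omegaRev R x * dv R * cv R) := by
  rw [mul_dv, add_mul, map_add, omegaRev_mul_bv_mul_av, omegaRev_mul_av_mul_av,
    omegaRev_mul_bv_mul_av, smul_mul_assoc]

end OmegaRev

section Coproduct

variable {R : Type} [CommRing R]

theorem Amap_letter (i : Bool) : Amap R (word R [i]) = if i then 1 else 0 := by
  simp [Amap, word]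

theorem Delta_mul_letter (x : AB R) (i : Bool) :
    Delta R (x * word R [i]) =
      (LinearMap.mulRight R (word R [i])).lTensor (AB R) (Delta R x) + x ⊗ₜ[R] 1 := by
  refine eq_of_eq_on_words (f := Delta R ∘ₗ LinearMap.mulRight R (word R [i]))
    (g := (LinearMap.mulRight R (word R [i])).lTensor (AB R) ∘ₗ Delta R +
      (TensorProduct.mk R (AB R) (AB R)).flip 1) (fun l => ?_) x
  have hsum : ∀ j ∈ Finset.range l.length,
      word R ((l ++ [i]).take j) ⊗ₜ[R] word R ((l ++ [i]).drop (j + 1)) =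
        word R (l.take j) ⊗ₜ[R] (word R (l.drop (j + 1)) * word R [i]) := by
    intro j hj
    have hj : j < l.length := Finset.mem_range.mp hj
    rw [List.take_append_of_le_length hj.le, List.drop_append_of_le_length hj, word_mul_word]
  simp [Delta, word_mul_word, Finset.sum_range_succ, Finset.sum_congr rfl hsum, word_nil]

theorem Cmap_apply (x : AB R) :
    Cmap R x = 2 * Amap R x + LinearMap.mul' R R
      (TensorProduct.map (Amap R).toLinearMap (Amap R).toLinearMap (Delta R x)) := by
  simp [Cmap]

theorem Cmap_mul_letter (x : AB R) (i : Bool) :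
    Cmap R (x * word R [i]) = Cmap R x * Amap R (word R [i]) + Amap R x := by
  set A := (Amap R).toLinearMap with hA
  have hΔ : ∀ t, LinearMap.mul' R R (TensorProduct.map A A
      ((LinearMap.mulRight R (word R [i])).lTensor (AB R) t)) =
        LinearMap.mul' R R (TensorProduct.map A A t) * Amap R (word R [i]) := by
    intro t
    induction t with
    | zero => simp
    | add s t hs ht => simp only [map_add, hs, ht, add_mul]
    | tmul u v => simp [A, mul_assoc]
  rw [Cmap_apply, Cmap_apply, Delta_mul_letter, map_add, map_add, ← hA, hΔ]
  simp only [A, TensorProduct.map_tmul, LinearMap.mul'_apply, AlgHom.toLinearMap_apply, map_mul,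
    map_one, mul_one]
  ring

theorem kappa_word (l : List Bool) :
    kappa R (word R l) = Amap R (word R l) • ev R ^ l.length :=
  onBasis_word _ l

theorem nuMap_word (l : List Bool) :
    nuMap R (word R l) = Cmap R (word R l) • ev R ^ l.length :=
  onBasis_word _ l

theorem kappa_one : kappa R 1 = 1 := by
  rw [← word_nil, kappa_word, word_nil, map_one, one_smul, List.length_nil, pow_zero]

theorem Delta_one : Delta R 1 = 0 := by
  simp [← word_nil, Delta]

theorem nuMap_one : nuMap R 1 = 2 := by
  have hC : Cmap R 1 = 2 := by
    rw [Cmap_apply, Delta_one, map_one, map_zero, map_zero, mul_one, add_zero]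
  rw [← word_nil, nuMap_word, word_nil, hC, List.length_nil, pow_zero, ofNat_smul_eq_nsmul,
    nsmul_one, Nat.cast_ofNat]

theorem kappa_mul_letter (x : AB R) (i : Bool) :
    kappa R (x * word R [i]) = kappa R x * Amap R (word R [i]) • ev R := by
  refine eq_of_eq_on_words (f := kappa R ∘ₗ LinearMap.mulRight R (word R [i]))
    (g := LinearMap.mulRight R (Amap R (word R [i]) • ev R) ∘ₗ kappa R) (fun l => ?_) x
  have hA : Amap R (word R (l ++ [i])) = Amap R (word R l) * Amap R (word R [i]) := by
    rw [← word_mul_word, map_mul]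
  simp [word_mul_word, kappa_word, hA, pow_succ, smul_smul]

theorem nuMap_mul_letter (x : AB R) (i : Bool) :
    nuMap R (x * word R [i]) =
      nuMap R x * Amap R (word R [i]) • ev R + kappa R x * ev R := by
  refine eq_of_eq_on_words (f := nuMap R ∘ₗ LinearMap.mulRight R (word R [i]))
    (g := LinearMap.mulRight R (Amap R (word R [i]) • ev R) ∘ₗ nuMap R +
      LinearMap.mulRight R (ev R) ∘ₗ kappa R) (fun l => ?_) x
  have hC : Cmap R (word R (l ++ [i])) =
      Cmap R (word R l) * Amap R (word R [i]) + Amap R (word R l) := by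
    rw [← word_mul_word, Cmap_mul_letter]
  simp [word_mul_word, nuMap_word, kappa_word, hC, pow_succ, smul_smul, add_smul]

end Coproduct

section Segments

/-- `cuts` lists distinct positions of a word of length `n` in increasing order.  Positions not of
this form would be truncated by the subtraction in `segments`. -/
def IsCutList (n : ℕ) (cuts : List ℕ) : Prop :=
  cuts.Pairwise (· < ·) ∧ ∀ i ∈ cuts, i < n

theorem isCutList_of_sublist_range {n : ℕ} {cuts : List ℕ} (h : cuts.Sublist (List.range n)) :
    IsCutList n cuts :=
  ⟨List.pairwise_lt_range.sublist h, fun _ hi => List.mem_range.mp (h.subset hi)⟩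

theorem IsCutList.tail {n i : ℕ} {cuts : List ℕ} (h : IsCutList n (i :: cuts)) :
    IsCutList (n - (i + 1)) (cuts.map fun j => j - (i + 1)) := by
  obtain ⟨hsorted, hlt⟩ := h
  obtain ⟨hi, hsorted⟩ := List.pairwise_cons.mp hsorted
  constructor
  · refine List.pairwise_map.mpr (hsorted.imp_of_mem fun {j k} hj _ hjk => ?_)
    have := hi j hj
    omega
  · intro _ hk
    obtain ⟨j, hj, rfl⟩ := List.mem_map.mp hk
    have := hi j hj
    have := hlt j (List.mem_cons_of_mem i hj)
    omega

-- Unlike in `segments.induct`, the induction hypothesis is free of `List.attach`.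
theorem segments_induction {motive : List Bool → List ℕ → Prop} (nil : ∀ l, motive l [])
    (cons : ∀ l i cuts, motive (l.drop (i + 1)) (cuts.map fun j => j - (i + 1)) →
      motive l (i :: cuts)) : ∀ l cuts, motive l cuts
  | l, [] => nil l
  | l, i :: cuts => cons l i cuts (segments_induction nil cons _ _)
  termination_by _ cuts => cuts.length
  decreasing_by simp

theorem exists_segments_append {l : List Bool} {cuts : List ℕ} (h : IsCutList l.length cuts) :
    ∃ ss s, segments l cuts = ss ++ [s] ∧ ∀ m, segments (l ++ m) cuts = ss ++ [s ++ m] := by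
  induction l, cuts using segments_induction with
  | nil l => exact ⟨[], l, by simp [segments], fun m => by simp [segments]⟩
  | cons l i cuts ih =>
    have hi : i < l.length := h.2 i List.mem_cons_self
    obtain ⟨ss, s, hs, happend⟩ := ih (List.length_drop ▸ h.tail)
    refine ⟨l.take i :: ss, s, by rw [segments, hs, List.cons_append], fun m => ?_⟩
    rw [segments, List.take_append_of_le_length hi.le, List.drop_append_of_le_length hi, happend,
      List.cons_append]

theorem segments_append_cons {l : List Bool} {cuts : List ℕ} (h : IsCutList l.length cuts)
    (x : Bool) (m : List Bool) :
    segments (l ++ x :: m) (cuts ++ [l.length]) = segments l cuts ++ [m] := by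
  induction l, cuts using segments_induction with
  | nil l => simp [segments]
  | cons l i cuts ih =>
    have hi : i < l.length := h.2 i List.mem_cons_self
    rw [List.length_drop] at ih
    rw [List.cons_append, segments, segments, List.take_append_of_le_length hi.le,
      List.drop_append_of_le_length hi, List.map_append, List.map_singleton, ih h.tail,
      List.cons_append]

end Segments

section ChainTransform

variable {R : Type} [CommRing R]

/-- For segments `[s₁, …, s_k]` this is `ν(s₁)·b·ν(s₂)·b ⋯ b·ν(s_{k-1})·b·f(s_k)`. -/
def chainProdLast (f : AB R →ₗ[R] AB R) (ss : List (List Bool)) : AB R :=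
  (ss.dropLast.map fun s => nuMap R (word R s) * bv R).prod * f (word R (ss.getLastD []))

/-- The variant of the Tchebyshev transform in which `κ` is replaced by `f`; the positions of
deleted letters are listed in increasing order. -/
def chainTransform (f : AB R →ₗ[R] AB R) : AB R →ₗ[R] AB R :=
  onBasis R fun w => ((List.range w.length).sublists.map fun cuts =>
    chainProdLast f (segments w cuts)).sum

theorem chainProdLast_append_singleton (f : AB R →ₗ[R] AB R) (ss : List (List Bool))
    (s : List Bool) :
    chainProdLast f (ss ++ [s]) =
      (ss.map fun t => nuMap R (word R t) * bv R).prod * f (word R s) := by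
  rw [chainProdLast, List.dropLast_concat, List.getLastD_concat]

theorem chainProd_append_singleton (ss : List (List Bool)) (s : List Bool) :
    chainProd R (ss ++ [s]) = chainProdLast (kappa R) (ss ++ [s]) := by
  rw [chainProdLast_append_singleton]
  induction ss with
  | nil => simp [chainProd]
  | cons t ss ih =>
    have hcons : chainProd R (t :: (ss ++ [s])) =
        nuMap R (word R t) * bv R * chainProd R (ss ++ [s]) :=
      chainProd.eq_3 R t (ss ++ [s]) (by simp)
    rw [List.cons_append, hcons, ih, List.map_cons, List.prod_cons, mul_assoc _ (List.prod _)]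

theorem chainTransform_word (f : AB R →ₗ[R] AB R) (l : List Bool) :
    chainTransform f (word R l) = ((List.range l.length).sublists.map fun cuts =>
      chainProdLast f (segments l cuts)).sum :=
  onBasis_word _ l

theorem Tmap_eq_chainTransform : Tmap R = chainTransform (kappa R) := by
  refine LinearMap.ext fun x => eq_of_eq_on_words (fun l => ?_) x
  rw [Tmap, onBasis_word, chainTransform_word,
    sum_finset_fin_sort l.length fun cuts => chainProd R (segments l cuts)]
  refine congrArg List.sum (List.map_congr_left fun cuts hcuts => ?_)
  obtain ⟨ss, s, hs, -⟩ :=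
    exists_segments_append (isCutList_of_sublist_range (List.mem_sublists.mp hcuts))
  rw [hs, chainProd_append_singleton]

theorem chainTransform_one (f : AB R →ₗ[R] AB R) : chainTransform f 1 = f 1 := by
  rw [← word_nil, chainTransform_word]
  simp [segments, chainProdLast]

theorem chainTransform_add (f g : AB R →ₗ[R] AB R) (x : AB R) :
    chainTransform (f + g) x = chainTransform f x + chainTransform g x := by
  refine eq_of_eq_on_words (g := chainTransform f + chainTransform g) (fun l => ?_) x
  simp [chainTransform_word, chainProdLast, mul_add, List.sum_map_add]

theorem chainTransform_mulRight_comp (y : AB R) (f : AB R →ₗ[R] AB R) (x : AB R) :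
    chainTransform (LinearMap.mulRight R y ∘ₗ f) x = chainTransform f x * y := by
  refine eq_of_eq_on_words (g := LinearMap.mulRight R y ∘ₗ chainTransform f) (fun l => ?_) x
  simp [chainTransform_word, chainProdLast, ← List.sum_map_mul_right, mul_assoc]

theorem chainProdLast_segments_append (f : AB R →ₗ[R] AB R) {l : List Bool} {cuts : List ℕ}
    (h : IsCutList l.length cuts) (m : List Bool) :
    chainProdLast f (segments (l ++ m) cuts) =
      chainProdLast (f ∘ₗ LinearMap.mulRight R (word R m)) (segments l cuts) := by
  obtain ⟨ss, s, hs, happend⟩ := exists_segments_append h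
  rw [hs, happend, chainProdLast_append_singleton, chainProdLast_append_singleton,
    LinearMap.comp_apply, LinearMap.mulRight_apply, word_mul_word]

theorem chainProdLast_segments_append_cons (f : AB R →ₗ[R] AB R) {l : List Bool}
    {cuts : List ℕ} (h : IsCutList l.length cuts) (x : Bool) (m : List Bool) :
    chainProdLast f (segments (l ++ x :: m) (cuts ++ [l.length])) =
      chainProdLast (nuMap R) (segments l cuts) * bv R * f (word R m) := by
  obtain ⟨ss, s, hs, -⟩ := exists_segments_append h
  rw [segments_append_cons h, hs, chainProdLast_append_singleton, chainProdLast_append_singleton,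
    List.map_append, List.prod_append, List.map_singleton, List.prod_singleton,
    mul_assoc _ _ (bv R)]

theorem chainTransform_mul_letter (f : AB R →ₗ[R] AB R) (x : AB R) (i : Bool) :
    chainTransform f (x * word R [i]) =
      chainTransform (f ∘ₗ LinearMap.mulRight R (word R [i])) x +
        chainTransform (nuMap R) x * bv R * f 1 := by
  refine eq_of_eq_on_words (f := chainTransform f ∘ₗ LinearMap.mulRight R (word R [i]))
    (g := chainTransform (f ∘ₗ LinearMap.mulRight R (word R [i])) +
      LinearMap.mulRight R (f 1) ∘ₗ LinearMap.mulRight R (bv R) ∘ₗ chainTransform (nuMap R))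
    (fun l => ?_) x
  simp only [LinearMap.comp_apply, LinearMap.add_apply, LinearMap.mulRight_apply, word_mul_word,
    chainTransform_word, List.length_append, List.length_singleton, List.range_succ,
    List.sublists_concat, List.map_append, List.sum_append, List.map_map,
    ← List.sum_map_mul_right]
  have hcut {cuts : List ℕ} (h : cuts ∈ (List.range l.length).sublists) :
      IsCutList l.length cuts :=
    isCutList_of_sublist_range (List.mem_sublists.mp h)
  congr 2
  · exact List.map_congr_left fun cuts h => chainProdLast_segments_append f (hcut h) [i]
  · refine List.map_congr_left fun cuts h => ?_
    rw [Function.comp_apply, chainProdLast_segments_append_cons f (hcut h), word_nil]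

theorem Tmap_mul_letter (x : AB R) (i : Bool) :
    Tmap R (x * word R [i]) =
      Tmap R x * Amap R (word R [i]) • ev R + chainTransform (nuMap R) x * bv R := by
  have hκ : kappa R ∘ₗ LinearMap.mulRight R (word R [i]) =
      LinearMap.mulRight R (Amap R (word R [i]) • ev R) ∘ₗ kappa R :=
    LinearMap.ext fun y => kappa_mul_letter y i
  rw [Tmap_eq_chainTransform, chainTransform_mul_letter, hκ, chainTransform_mulRight_comp,
    kappa_one, mul_one]

theorem chainTransform_nuMap_mul_letter (x : AB R) (i : Bool) :
    chainTransform (nuMap R) (x * word R [i]) =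
      chainTransform (nuMap R) x * Amap R (word R [i]) • ev R + Tmap R x * ev R +
        2 • (chainTransform (nuMap R) x * bv R) := by
  have hν : nuMap R ∘ₗ LinearMap.mulRight R (word R [i]) =
      LinearMap.mulRight R (Amap R (word R [i]) • ev R) ∘ₗ nuMap R +
        LinearMap.mulRight R (ev R) ∘ₗ kappa R :=
    LinearMap.ext fun y => nuMap_mul_letter y i
  rw [Tmap_eq_chainTransform, chainTransform_mul_letter, hν, chainTransform_add,
    chainTransform_mulRight_comp, chainTransform_mulRight_comp, nuMap_one, mul_two, two_nsmul]

theorem Tmap_mul_av (x : AB R) :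
    Tmap R (x * av R) = Tmap R x * ev R + chainTransform (nuMap R) x * bv R := by
  rw [av, Tmap_mul_letter, Amap_letter, if_pos rfl, one_smul]

theorem Tmap_mul_bv (x : AB R) : Tmap R (x * bv R) = chainTransform (nuMap R) x * bv R :=
  (Tmap_mul_letter x false).trans (by simp [Amap_letter, bv])

theorem chainTransform_nuMap_mul_av (x : AB R) :
    chainTransform (nuMap R) (x * av R) =
      Tmap R x * ev R + chainTransform (nuMap R) x * cv R := by
  rw [av, chainTransform_nuMap_mul_letter, Amap_letter, if_pos rfl, one_smul, cv, ev]
  noncomm_ring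

theorem chainTransform_nuMap_mul_bv (x : AB R) :
    chainTransform (nuMap R) (x * bv R) =
      Tmap R x * ev R + 2 • (chainTransform (nuMap R) x * bv R) :=
  (chainTransform_nuMap_mul_letter x false).trans (by simp [Amap_letter, bv])

theorem Tmap_av : Tmap R (av R) = cv R := by
  rw [← one_mul (av R), Tmap_mul_av, Tmap_eq_chainTransform, chainTransform_one,
    chainTransform_one, kappa_one, nuMap_one, ev, cv]
  noncomm_ring

theorem chainTransform_nuMap_mul_cv (x : AB R) :
    chainTransform (nuMap R) (x * cv R) =
      2 • Tmap R (x * av R) + chainTransform (nuMap R) x * cv R := by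
  conv_lhs => rw [cv, mul_add, map_add, chainTransform_nuMap_mul_av, chainTransform_nuMap_mul_bv]
  rw [Tmap_mul_av, cv, mul_add]
  abel

theorem Tmap_mul_cv_mul_av (x : AB R) :
    Tmap R (x * cv R * av R) =
      Tmap R (x * av R) * cv R + chainTransform (nuMap R) x * dv R := by
  have hT : Tmap R (x * cv R) = Tmap R (x * av R) + Tmap R (x * bv R) := by
    rw [cv, mul_add, map_add]
  rw [Tmap_mul_av, hT, chainTransform_nuMap_mul_cv, Tmap_mul_av, Tmap_mul_bv, cv, dv, ev]
  noncomm_ring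

theorem chainTransform_nuMap_mul_dv (x : AB R) :
    chainTransform (nuMap R) (x * dv R) =
      2 • (Tmap R (x * av R) * cv R) + 2 • (chainTransform (nuMap R) x * dv R) := by
  rw [mul_dv, map_add, chainTransform_nuMap_mul_av, chainTransform_nuMap_mul_bv, Tmap_mul_bv,
    chainTransform_nuMap_mul_bv, chainTransform_nuMap_mul_av, Tmap_mul_av, cv, dv, ev]
  noncomm_ring

theorem Tmap_mul_dv_mul_av (x : AB R) :
    Tmap R (x * dv R * av R) =
      2 • (Tmap R (x * av R) * dv R) + chainTransform (nuMap R) x * dv R * cv R := by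
  have hT : Tmap R (x * dv R) = Tmap R (x * av R * bv R) + Tmap R (x * bv R * av R) := by
    rw [mul_dv, map_add]
  rw [Tmap_mul_av, hT, chainTransform_nuMap_mul_dv, Tmap_mul_bv, Tmap_mul_av (x * bv R),
    Tmap_mul_bv, chainTransform_nuMap_mul_bv, chainTransform_nuMap_mul_av, Tmap_mul_av, cv, dv, ev]
  noncomm_ring

end ChainTransform

theorem tchebyshev_eq_omega_general (R : Type) [CommRing R] (v : AB R)
    (hv : v ∈ Algebra.adjoin R ({cv R, dv R} : Set (AB R))) :
    Tmap R (v * av R) = revMap R (omegaMap R (av R * revMap R v)) := by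
  let S : Submodule R (AB R) :=
    LinearMap.eqLocus (Tmap R ∘ₗ LinearMap.mulRight R (av R))
      (omegaRev R ∘ₗ LinearMap.mulRight R (av R)) ⊓
    LinearMap.eqLocus (chainTransform (nuMap R)) (2 • omegaRev R)
  have mem_S (x : AB R) : x ∈ S ↔ Tmap R (x * av R) = omegaRev R (x * av R) ∧
      chainTransform (nuMap R) x = 2 • omegaRev R x := Iff.rfl
  have one_mem : 1 ∈ S := by
    rw [mem_S, one_mul, Tmap_av, omegaRev_av, chainTransform_one, nuMap_one, omegaRev_one,
      nsmul_one, Nat.cast_ofNat]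
    exact ⟨rfl, rfl⟩
  have mul_mem_right : ∀ x ∈ S, ∀ y ∈ ({cv R, dv R} : Set (AB R)), x * y ∈ S := by
    simp only [mem_S]
    rintro x ⟨hT, hN⟩ y (rfl | rfl)
    · rw [Tmap_mul_cv_mul_av, chainTransform_nuMap_mul_cv, omegaRev_mul_cv_mul_av,
        omegaRev_mul_cv, hT, hN, nsmul_add, smul_mul_assoc, smul_mul_assoc]
      exact ⟨rfl, rfl⟩
    · rw [Tmap_mul_dv_mul_av, chainTransform_nuMap_mul_dv, omegaRev_mul_dv_mul_av,
        omegaRev_mul_dv, hT, hN, nsmul_add, smul_mul_assoc, smul_mul_assoc]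
      exact ⟨rfl, rfl⟩
  rw [← omegaRev_mul_av]
  exact (adjoin_le_of_mul_mem_right one_mem mul_mem_right hv).1

theorem tchebyshev_eq_omega (v : AB ℤ)
    (hv : v ∈ Algebra.adjoin ℤ ({cv ℤ, dv ℤ} : Set (AB ℤ))) :
    Tmap ℤ (v * av ℤ) = revMap ℤ (omegaMap ℤ (av ℤ * revMap ℤ v)) :=
  tchebyshev_eq_omega_general ℤ v hv

end Tcheb
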